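/- Let A be the 2×2 complex matrix A = [[(−5^{3/4} + 5^{5/4})/10, 5^{−1/4}], [(−5^{3/4} − 5^{5/4})/10, 5^{−1/4}]]. Then: (i) for the 2-arity OR gate G = |10⟩ + |01⟩ + |11⟩, one has (A⊗A)G = |00⟩ − |11⟩ (so OR is Pfaffian under the homogeneous change of basis A, with (A⊗A)G = sPf([[0,−1],[1,0]])); and (ii) the change of basis of the EQUAL cogate ⟨00| + ⟨11| under (A,A) (i.e. the transform by A⁻¹⊗A⁻¹ via the cogate rule) equals ((√5 − 1)/2)·((√5/2 + 3/2)⟨00| + ⟨11|), so the EQUAL cogate is Pfaffian under A with β = (√5 − 1)/2 and Θ₁₂ = √5/2 + 3/2. -/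

import Mathlib

open scoped BigOperators

noncomputable section

/-- Change of basis on an `n`-arity gate: `((A₁⊗…⊗Aₙ)G)(b) = Σ_c (∏ᵢ Aᵢ(bᵢ,cᵢ))·G(c)`. -/
def cobGate {n : ℕ} (A : Fin n → Matrix (Fin 2) (Fin 2) ℂ) (G : (Fin n → Fin 2) → ℂ) :
    (Fin n → Fin 2) → ℂ :=
  fun b => ∑ c : Fin n → Fin 2, (∏ i, A i (b i) (c i)) * G c

/-- Change of basis on an `n`-arity cogate: `C′(b) = Σ_c C(c)·∏ᵢ Aᵢ⁻¹(cᵢ,bᵢ)`. -/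
def cobCogate {n : ℕ} (A : Fin n → Matrix (Fin 2) (Fin 2) ℂ) (C : (Fin n → Fin 2) → ℂ) :
    (Fin n → Fin 2) → ℂ :=
  fun b => ∑ c : Fin n → Fin 2, C c * ∏ i, (A i)⁻¹ (c i) (b i)

/-- The standard basis vector (ket/bra) at the bitstring `v`. -/
def ket {n : ℕ} (v : Fin n → Fin 2) : (Fin n → Fin 2) → ℂ :=
  fun b => if b = v then 1 else 0

/-- The support of a bitstring. -/
def supp {n : ℕ} (b : Fin n → Fin 2) : Finset (Fin n) :=
  Finset.univ.filter fun i => b i = 1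

/-- Fuel-driven Laplace expansion of the Pfaffian of a principal submatrix. -/
def subPfAux {n : ℕ} (Ξ : Matrix (Fin n) (Fin n) ℂ) : ℕ → Finset (Fin n) → ℂ
  | 0, I => if I = ∅ then 1 else 0
  | fuel + 1, I =>
    if hI : I.Nonempty then
      if Odd I.card then 0
      else
        ∑ i ∈ I.erase (I.min' hI),
          (-1 : ℂ) ^ (I.filter fun j => j ≤ i).card * Ξ (I.min' hI) i *
            subPfAux Ξ fuel ((I.erase (I.min' hI)).erase i)
    else 1

/-- `subPf Ξ I` is the Pfaffian `Pf(Ξ|_I)` of the principal submatrix of `Ξ` on the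
rows and columns in `I` (`1` on the empty set, `0` for odd `|I|`). -/
def subPf {n : ℕ} (Ξ : Matrix (Fin n) (Fin n) ℂ) (I : Finset (Fin n)) : ℂ :=
  subPfAux Ξ I.card I

/-- The sub-Pfaffian vector: coordinate `Pf(Ξ|_I)` at the bitstring with support `I`. -/
def sPf {n : ℕ} (Ξ : Matrix (Fin n) (Fin n) ℂ) : (Fin n → Fin 2) → ℂ :=
  fun b => subPf Ξ (supp b)

/-- The dual sub-Pfaffian vector: coordinate `Pf(Θ|_{Jᶜ})` at the bitstring with support `J`. -/
def sPfStar {n : ℕ} (Θ : Matrix (Fin n) (Fin n) ℂ) : (Fin n → Fin 2) → ℂ :=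
  fun b => subPf Θ (supp b)ᶜ

/-- A matrix is skew-symmetric. -/
def IsSkew {n : ℕ} (Ξ : Matrix (Fin n) (Fin n) ℂ) : Prop :=
  ∀ i j, Ξ j i = -Ξ i j

/-- A gate is Pfaffian under the change of basis `M`. -/
def IsPfaffGate {n : ℕ} (M : Fin n → Matrix (Fin 2) (Fin 2) ℂ) (G : (Fin n → Fin 2) → ℂ) : Prop :=
  ∃ (α : ℂ) (Ξ : Matrix (Fin n) (Fin n) ℂ), IsSkew Ξ ∧ cobGate M G = fun b => α * sPf Ξ b

/-- A cogate is Pfaffian under the change of basis `M`. -/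
def IsPfaffCogate {n : ℕ} (M : Fin n → Matrix (Fin 2) (Fin 2) ℂ) (C : (Fin n → Fin 2) → ℂ) : Prop :=
  ∃ (β : ℂ) (Θ : Matrix (Fin n) (Fin n) ℂ), IsSkew Θ ∧ cobCogate M C = fun b => β * sPfStar Θ b

def mA : Matrix (Fin 2) (Fin 2) ℂ :=
  !![(((-((5:ℝ) ^ ((3:ℝ)/4)) + (5:ℝ) ^ ((5:ℝ)/4)) / 10 : ℝ) : ℂ),
     (((5:ℝ) ^ (-(1:ℝ)/4) : ℝ) : ℂ);
     (((-((5:ℝ) ^ ((3:ℝ)/4)) - (5:ℝ) ^ ((5:ℝ)/4)) / 10 : ℝ) : ℂ),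
     (((5:ℝ) ^ (-(1:ℝ)/4) : ℝ) : ℂ)]

/-! A tensor on two bits is a `2 × 2` matrix `G`, and a change of basis acts on it by the congruence
`G ↦ M * G * Nᵀ`. With the golden ratio `φ` and its conjugate `ψ`, the basis is
`A = 5^(-1/4) • !![-ψ, 1; -φ, 1]`. Since `φ + ψ = 1`, this congruence diagonalizes the OR matrix;
since `φ * ψ = -1`, the rows of `A` are orthogonal, so that the transform `(A * Aᵀ)⁻¹` of EQUAL is
diagonal too. The scalar `5^(-1/4)` is there to make `det A = √5 / √5 = 1`. -/

open Matrix
open scoped goldenRatio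

section SubPfaffian

variable {n : ℕ} (Ξ : Matrix (Fin n) (Fin n) ℂ)

lemma subPf_empty : subPf Ξ ∅ = 1 := by
  simp [subPf, subPfAux]

lemma subPf_of_odd_card {I : Finset (Fin n)} (hI : Odd I.card) : subPf Ξ I = 0 := by
  obtain ⟨k, hk⟩ := hI
  have hne : I.Nonempty := Finset.card_pos.mp (by omega)
  have hodd : Odd (2 * k + 1) := odd_two_mul_add_one k
  simp [subPf, subPfAux, hk, hne, hodd]

lemma subPf_pair {i j : Fin n} (hij : i < j) : subPf Ξ {i, j} = Ξ i j := by
  have hcard : ({i, j} : Finset (Fin n)).card = 2 := Finset.card_pair hij.ne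
  have hmin (h : ({i, j} : Finset (Fin n)).Nonempty) : Finset.min' {i, j} h = i := by
    simp [Finset.min'_insert, hij.le]
  have herase : ({i, j} : Finset (Fin n)).erase i = {j} := by
    simp [hij.ne]
  have hfilter : ({i, j} : Finset (Fin n)).filter (· ≤ j) = {i, j} := by
    simp [Finset.filter_insert, Finset.filter_singleton, hij.le]
  simp [subPf, subPfAux, hcard, hmin, herase, hfilter]

end SubPfaffian

section TwoBits

/-- The gate or cogate on two bits whose coordinate at the bitstring `(i, j)` is `G i j`. It turns
changes of basis into matrix products. -/
def tensorOfMatrix (G : Matrix (Fin 2) (Fin 2) ℂ) : (Fin 2 → Fin 2) → ℂ :=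
  fun b => G (b 0) (b 1)

lemma ket_pair_apply (i j : Fin 2) (b : Fin 2 → Fin 2) :
    ket ![i, j] b = if b 0 = i ∧ b 1 = j then 1 else 0 := by
  simp [ket, funext_iff]

lemma tensorOfMatrix_eq_sum_ket (G : Matrix (Fin 2) (Fin 2) ℂ) :
    tensorOfMatrix G = ∑ i, ∑ j, G i j • ket ![i, j] := by
  funext b
  simp [tensorOfMatrix, ket_pair_apply, ite_and, -Fin.sum_univ_two]

lemma tensorOfMatrix_diagonal (d : Fin 2 → ℂ) :
    tensorOfMatrix (diagonal d) = d 0 • ket ![0, 0] + d 1 • ket ![1, 1] := by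
  simp [tensorOfMatrix_eq_sum_ket]

lemma ket_add_ket_add_ket_eq_tensorOfMatrix :
    ket ![1, 0] + ket ![0, 1] + ket ![1, 1] = tensorOfMatrix !![0, 1; 1, 1] := by
  rw [tensorOfMatrix_eq_sum_ket]
  simp [add_assoc, add_left_comm]

lemma ket_add_ket_eq_tensorOfMatrix_one :
    ket ![0, 0] + ket ![1, 1] = tensorOfMatrix 1 := by
  simp [tensorOfMatrix_eq_sum_ket]

lemma sum_finTwo_arrow {α M : Type*} [Fintype α] [AddCommMonoid M] (f : (Fin 2 → α) → M) :
    ∑ c, f c = ∑ i, ∑ j, f ![i, j] := by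
  rw [← (finTwoArrowEquiv α).symm.sum_comp, Fintype.sum_prod_type]
  rfl

lemma cobGate_tensorOfMatrix (M N G : Matrix (Fin 2) (Fin 2) ℂ) :
    cobGate ![M, N] (tensorOfMatrix G) = tensorOfMatrix (M * G * Nᵀ) := by
  funext b
  simp only [cobGate, tensorOfMatrix, sum_finTwo_arrow, mul_apply, transpose_apply,
    Fin.prod_univ_two, Fin.sum_univ_two, cons_val_zero, cons_val_one]
  ring

lemma cobCogate_eq_cobGate {n : ℕ} (A : Fin n → Matrix (Fin 2) (Fin 2) ℂ)
    (C : (Fin n → Fin 2) → ℂ) : cobCogate A C = cobGate (fun i => (A i)⁻¹ᵀ) C := by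
  funext b
  simp only [cobCogate, cobGate, transpose_apply, mul_comm]

lemma cobCogate_tensorOfMatrix (M N C : Matrix (Fin 2) (Fin 2) ℂ) :
    cobCogate ![M, N] (tensorOfMatrix C) = tensorOfMatrix (M⁻¹ᵀ * C * N⁻¹) := by
  have hbasis : (fun i => (![M, N] i)⁻¹ᵀ) = ![M⁻¹ᵀ, N⁻¹ᵀ] := by
    ext i : 1
    fin_cases i <;> rfl
  rw [cobCogate_eq_cobGate, hbasis, cobGate_tensorOfMatrix, transpose_transpose]

lemma cobCogate_tensorOfMatrix_one (M N : Matrix (Fin 2) (Fin 2) ℂ) :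
    cobCogate ![M, N] (tensorOfMatrix 1) = tensorOfMatrix (N * Mᵀ)⁻¹ := by
  rw [cobCogate_tensorOfMatrix, mul_one, Matrix.mul_inv_rev, transpose_nonsing_inv]

lemma sPf_fin_two (Ξ : Matrix (Fin 2) (Fin 2) ℂ) :
    sPf Ξ = ket ![0, 0] + Ξ 0 1 • ket ![1, 1] := by
  have h00 : supp ![0, 0] = (∅ : Finset (Fin 2)) := by decide
  have h01 : supp ![0, 1] = ({1} : Finset (Fin 2)) := by decide
  have h10 : supp ![1, 0] = ({0} : Finset (Fin 2)) := by decide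
  have h11 : supp ![1, 1] = ({0, 1} : Finset (Fin 2)) := by decide
  funext b
  obtain ⟨⟨i, j⟩, rfl⟩ := (finTwoArrowEquiv (Fin 2)).symm.surjective b
  fin_cases i <;> fin_cases j
  · simp [sPf, h00, subPf_empty, ket_pair_apply]
  · simp [sPf, h01, subPf_of_odd_card, ket_pair_apply]
  · simp [sPf, h10, subPf_of_odd_card, ket_pair_apply]
  · simp [sPf, h11, subPf_pair, ket_pair_apply]

end TwoBits

section Congruence

variable {R : Type*} [CommRing R]

lemma smul_mul_mul_transpose_smul {m : Type*} [Fintype m] (s : R) (M G : Matrix m m R) :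
    (s • M) * G * (s • M)ᵀ = s ^ 2 • (M * G * Mᵀ) := by
  rw [transpose_smul, Matrix.smul_mul, Matrix.smul_mul, Matrix.mul_smul, smul_smul, sq]

lemma mul_or_mul_transpose_eq_smul_diagonal {x y : R} (hsum : x + y = 1) :
    !![-x, 1; -y, 1] * !![0, 1; 1, 1] * !![-x, 1; -y, 1]ᵀ = (y - x) • diagonal ![1, -1] := by
  ext i j
  fin_cases i <;> fin_cases j <;> simp [mul_apply] <;> linear_combination -hsum

lemma mul_transpose_eq_smul_diagonal {x y : R} (hprod : x * y = -1) :
    !![-x, 1; -y, 1] * !![-x, 1; -y, 1]ᵀ = (y - x) • diagonal ![-x, y] := by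
  ext i j
  fin_cases i <;> fin_cases j <;> simp [mul_apply] <;> linear_combination hprod

end Congruence

section GoldenBasis

lemma five_rpow_neg_quarter_sq_mul_sqrt_five : ((5 : ℝ) ^ (-(1 : ℝ) / 4)) ^ 2 * √5 = 1 := by
  rw [← Real.rpow_mul_natCast (by norm_num), Real.sqrt_eq_rpow, ← Real.rpow_add (by norm_num)]
  norm_num

lemma mA_eq_smul_golden :
    mA = (((5 : ℝ) ^ (-(1 : ℝ) / 4) : ℝ) : ℂ) • !![-(ψ : ℂ), 1; -(φ : ℂ), 1] := by
  have h3 : (5 : ℝ) ^ ((3 : ℝ) / 4) = 5 ^ (-(1 : ℝ) / 4) * 5 := by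
    rw [← Real.rpow_add_one (by norm_num)]
    norm_num
  have h5 : (5 : ℝ) ^ ((5 : ℝ) / 4) = 5 ^ ((3 : ℝ) / 4) * √5 := by
    rw [Real.sqrt_eq_rpow, ← Real.rpow_add (by norm_num)]
    norm_num
  rw [mA, h5, h3]
  ext i j
  fin_cases i <;> fin_cases j <;> simp [Real.goldenRatio, Real.goldenConj] <;> ring

lemma five_rpow_neg_quarter_sq_mul_golden_sub :
    (((5 : ℝ) ^ (-(1 : ℝ) / 4) : ℝ) : ℂ) ^ 2 * ((φ : ℂ) - ψ) = 1 := by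
  have h := five_rpow_neg_quarter_sq_mul_sqrt_five
  rw [← Real.goldenRatio_sub_goldenConj] at h
  exact_mod_cast h

lemma mA_mul_or_mul_transpose : mA * !![0, 1; 1, 1] * mAᵀ = diagonal ![1, -1] := by
  have hsum : (ψ : ℂ) + φ = 1 := by
    exact_mod_cast (add_comm ψ φ).trans Real.goldenRatio_add_goldenConj
  rw [mA_eq_smul_golden, smul_mul_mul_transpose_smul,
    mul_or_mul_transpose_eq_smul_diagonal hsum, smul_smul,
    five_rpow_neg_quarter_sq_mul_golden_sub, one_smul]

lemma mA_mul_transpose : mA * mAᵀ = diagonal ![-(ψ : ℂ), φ] := by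
  have hprod : (ψ : ℂ) * φ = -1 := by
    exact_mod_cast Real.goldenConj_mul_goldenRatio
  calc mA * mAᵀ = mA * 1 * mAᵀ := by rw [mul_one]
    _ = diagonal ![-(ψ : ℂ), φ] := by
      rw [mA_eq_smul_golden, smul_mul_mul_transpose_smul, mul_one,
        mul_transpose_eq_smul_diagonal hprod, smul_smul,
        five_rpow_neg_quarter_sq_mul_golden_sub, one_smul]

lemma inv_mA_mul_transpose : (mA * mAᵀ)⁻¹ = diagonal ![(φ : ℂ), -ψ] := by
  have hφψ : (φ : ℂ) * ψ = -1 := by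
    exact_mod_cast Real.goldenRatio_mul_goldenConj
  apply inv_eq_right_inv
  rw [mA_mul_transpose, diagonal_mul_diagonal, diagonal_eq_one, funext_iff, Fin.forall_fin_two]
  constructor
  · change -(ψ : ℂ) * φ = 1
    linear_combination -hφψ
  · change (φ : ℂ) * -ψ = 1
    linear_combination -hφψ

lemma cobGate_mA_or : cobGate ![mA, mA] (ket ![1, 0] + ket ![0, 1] + ket ![1, 1]) =
    ket ![0, 0] - ket ![1, 1] := by
  rw [ket_add_ket_add_ket_eq_tensorOfMatrix, cobGate_tensorOfMatrix, mA_mul_or_mul_transpose,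
    tensorOfMatrix_diagonal]
  simp [sub_eq_add_neg]

lemma cobCogate_mA_equal : cobCogate ![mA, mA] (ket ![0, 0] + ket ![1, 1]) =
    (φ : ℂ) • ket ![0, 0] + (-ψ : ℂ) • ket ![1, 1] := by
  rw [ket_add_ket_eq_tensorOfMatrix_one, cobCogate_tensorOfMatrix_one, inv_mA_mul_transpose,
    tensorOfMatrix_diagonal]
  rfl

end GoldenBasis

/-- Example 1.3: Pfaffian certificates for the OR gate and the EQUAL
cogate under the homogeneous change of basis `A`. -/
theorem stmt19 :
    -- (i)
    (cobGate ![mA, mA] (ket ![1, 0] + ket ![0, 1] + ket ![1, 1]) =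
      fun b => ket ![0, 0] b - ket ![1, 1] b) ∧
    (cobGate ![mA, mA] (ket ![1, 0] + ket ![0, 1] + ket ![1, 1]) =
      fun b => sPf !![0, -1; 1, 0] b) ∧
    -- (ii)
    (cobCogate ![mA, mA] (ket ![0, 0] + ket ![1, 1]) =
      fun b => (((Real.sqrt 5 - 1) / 2 : ℝ) : ℂ) *
        ((((Real.sqrt 5 / 2 + 3 / 2 : ℝ)) : ℂ) * ket ![0, 0] b + ket ![1, 1] b)) := by
  refine ⟨cobGate_mA_or, ?_, ?_⟩
  · rw [cobGate_mA_or, sPf_fin_two]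
    funext b
    simp [sub_eq_add_neg]
  · have hβ : (√5 - 1) / 2 = -ψ := by rw [Real.goldenConj]; ring
    have hΘ : √5 / 2 + 3 / 2 = φ ^ 2 := by rw [Real.goldenRatio_sq, Real.goldenRatio]; ring
    have hβΘ : ((-ψ : ℝ) : ℂ) * ((φ ^ 2 : ℝ) : ℂ) = φ := by
      norm_cast
      linear_combination -φ * Real.goldenConj_mul_goldenRatio
    rw [cobCogate_mA_equal, hβ, hΘ]
    funext b
    rw [mul_add, ← mul_assoc, hβΘ, Complex.ofReal_neg]
    rfl
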